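/- Let N ≥ 3 and 0 < δ < N−2. There exists a constant C > 0 such that for all y ∈ ℝ^N: ∫_{ℝ^N} |y−z|^{−(N−2)} (1+|z|)^{−(2+δ)} dz ≤ C (1+|y|)^{−δ}. -/

import Mathlib

open MeasureTheory

lemma aux_integrable {N : ℕ} (hN : 3 ≤ N) (p q : ℝ) (hp : p < N) (hq : 0 ≤ q) (hpq : (N : ℝ) < p + q) :
    Integrable (fun x : EuclideanSpace ℝ (Fin N) => ‖x‖ ^ (-p) * (1 + ‖x‖) ^ (-q)) := by
  have : Nonempty (Fin N) := ⟨⟨0, by omega⟩⟩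
  have key := integrable_fun_norm_addHaar (volume : Measure (EuclideanSpace ℝ (Fin N)))
    (f := fun r : ℝ => r ^ (-p) * (1 + r) ^ (-q))
  refine key.mpr ?_
  simp only [finrank_euclideanSpace, Fintype.card_fin, smul_eq_mul]
  have hmeas : Measurable (fun r : ℝ => r ^ (N - 1) * (r ^ (-p) * (1 + r) ^ (-q))) := by fun_prop
  have hpow : ∀ r : ℝ, 0 < r → r ^ (N - 1) * (r ^ (-p) * (1 + r) ^ (-q))
      = r ^ ((N : ℝ) - 1 - p) * (1 + r) ^ (-q) := by
    intro r hr
    rw [← mul_assoc, ← Real.rpow_natCast, ← Real.rpow_add hr]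
    congr 2
    rw [Nat.cast_sub (by omega)]
    push_cast; ring
  rw [← Set.Ioc_union_Ioi_eq_Ioi (zero_le_one (α := ℝ))]
  refine IntegrableOn.union ?_ ?_
  · have h1 : IntegrableOn (fun r : ℝ => r ^ ((N : ℝ) - 1 - p)) (Set.Ioc 0 1) := by
      rw [← intervalIntegrable_iff_integrableOn_Ioc_of_le zero_le_one]
      exact intervalIntegral.intervalIntegrable_rpow' (by linarith)
    refine Integrable.mono' h1 hmeas.aestronglyMeasurable ?_
    refine (ae_restrict_iff' measurableSet_Ioc).mpr (Filter.Eventually.of_forall fun r hr => ?_)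
    have hr0 : 0 < r := hr.1
    rw [hpow r hr0, Real.norm_of_nonneg (by positivity)]
    exact mul_le_of_le_one_right (by positivity)
      (Real.rpow_le_one_of_one_le_of_nonpos (by linarith) (by linarith))
  · have h1 : IntegrableOn (fun r : ℝ => r ^ ((N : ℝ) - 1 - p - q)) (Set.Ioi 1) :=
      integrableOn_Ioi_rpow_of_lt (by linarith) zero_lt_one
    refine Integrable.mono' h1 hmeas.aestronglyMeasurable ?_
    refine (ae_restrict_iff' measurableSet_Ioi).mpr (Filter.Eventually.of_forall fun r hr => ?_)
    have hr0 : 0 < r := zero_lt_one.trans hr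
    rw [hpow r hr0, Real.norm_of_nonneg (by positivity), sub_eq_add_neg _ q, Real.rpow_add hr0]
    exact mul_le_mul_of_nonneg_left
      (Real.rpow_le_rpow_of_nonpos hr0 (by linarith) (by linarith)) (by positivity)

lemma aux_scale {N : ℕ} (p q R : ℝ) (hR : 0 < R) (x : EuclideanSpace ℝ (Fin N)) :
    ‖x‖ ^ (-p) * (R + ‖x‖) ^ (-q) =
      R ^ (-(p + q)) * (‖R⁻¹ • x‖ ^ (-p) * (1 + ‖R⁻¹ • x‖) ^ (-q)) := by
  have h1 : ‖R⁻¹ • x‖ = R⁻¹ * ‖x‖ := by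
    rw [norm_smul, Real.norm_of_nonneg (by positivity)]
  have h2 : ‖x‖ = R * ‖R⁻¹ • x‖ := by rw [h1]; field_simp
  have h3 : R + ‖x‖ = R * (1 + ‖R⁻¹ • x‖) := by rw [h1]; field_simp
  rw [h3, h2, Real.mul_rpow hR.le (norm_nonneg _), Real.mul_rpow hR.le (by positivity),
    neg_add, Real.rpow_add hR]
  ring

lemma aux_int_scale {N : ℕ} (hN : 3 ≤ N) (p q R : ℝ) (hR : 0 < R)
    (hp : p < N) (hq : 0 ≤ q) (hpq : (N : ℝ) < p + q) :
    Integrable (fun x : EuclideanSpace ℝ (Fin N) => ‖x‖ ^ (-p) * (R + ‖x‖) ^ (-q)) ∧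
    ∫ x : EuclideanSpace ℝ (Fin N), ‖x‖ ^ (-p) * (R + ‖x‖) ^ (-q) =
      R ^ ((N : ℝ) - (p + q)) *
        ∫ x : EuclideanSpace ℝ (Fin N), ‖x‖ ^ (-p) * (1 + ‖x‖) ^ (-q) := by
  simp_rw [aux_scale p q R hR]
  constructor
  · exact ((aux_integrable hN p q hp hq hpq).comp_smul (inv_ne_zero hR.ne')).const_mul _
  · rw [integral_const_mul, Measure.integral_comp_inv_smul volume
      (fun x : EuclideanSpace ℝ (Fin N) => ‖x‖ ^ (-p) * (1 + ‖x‖) ^ (-q)) R]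
    rw [finrank_euclideanSpace, Fintype.card_fin, smul_eq_mul, ← mul_assoc,
      abs_of_nonneg (by positivity), sub_eq_neg_add, Real.rpow_add hR, Real.rpow_natCast]

theorem stmt_1 {N : ℕ} (hN : 3 ≤ N) (δ : ℝ) (hδ0 : 0 < δ) (hδ : δ < (N : ℝ) - 2) :
    ∃ C : ℝ, 0 < C ∧ ∀ y : EuclideanSpace ℝ (Fin N),
      (∫ z : EuclideanSpace ℝ (Fin N),
          ‖y - z‖ ^ (-((N : ℝ) - 2)) * (1 + ‖z‖) ^ (-(2 + δ))) ≤ C * (1 + ‖y‖) ^ (-δ) := by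
  have : Nonempty (Fin N) := ⟨⟨0, by omega⟩⟩
  have : Nontrivial (EuclideanSpace ℝ (Fin N)) := by
    apply Module.nontrivial_of_finrank_pos (R := ℝ)
    rw [finrank_euclideanSpace, Fintype.card_fin]; omega
  have hN' : (3 : ℝ) ≤ N := by exact_mod_cast hN
  obtain ⟨a, ha⟩ : ∃ a : ℝ, a = (N : ℝ) - 2 := ⟨_, rfl⟩
  obtain ⟨b, hb⟩ : ∃ b : ℝ, b = 2 + δ := ⟨_, rfl⟩
  rw [← ha, ← hb]
  set I1 := ∫ x : EuclideanSpace ℝ (Fin N), ‖x‖ ^ (-a) * (1 + ‖x‖) ^ (-b) with hI1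
  set I2 := ∫ x : EuclideanSpace ℝ (Fin N), ‖x‖ ^ (-b) * (1 + ‖x‖) ^ (-a) with hI2
  have hI1n : 0 ≤ I1 := integral_nonneg fun x => by positivity
  have hI2n : 0 ≤ I2 := integral_nonneg fun x => by positivity
  refine ⟨3 ^ b * I1 + 5 ^ a * I2 + 1, by positivity, fun y => ?_⟩
  set R := 1 + ‖y‖ with hRdef
  have hR : 0 < R := by positivity
  obtain ⟨i1, e1⟩ := aux_int_scale hN a b R hR (by linarith) (by linarith) (by linarith)
  obtain ⟨i2, e2⟩ := aux_int_scale hN b a R hR (by linarith) (by linarith) (by linarith)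
  have i1' := (i1.comp_sub_left y).const_mul (3 ^ b)
  have i2' := i2.const_mul (5 ^ a)
  have e1' := integral_sub_left_eq_self
    (fun x : EuclideanSpace ℝ (Fin N) => ‖x‖ ^ (-a) * (R + ‖x‖) ^ (-b)) volume y
  have hscale : ∀ c t s m : ℝ, 0 < c → 0 < t → 0 < s → 0 ≤ m → s ≤ c * t →
      t ^ (-m) ≤ c ^ m * s ^ (-m) := by
    intro c t s m hc ht hs hm h
    have h1 : (c * t) ^ (-m) ≤ s ^ (-m) := Real.rpow_le_rpow_of_nonpos hs h (by linarith)
    rw [Real.mul_rpow hc.le ht.le] at h1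
    calc t ^ (-m) = c ^ m * (c ^ (-m) * t ^ (-m)) := by
          rw [← mul_assoc, ← Real.rpow_add hc]; simp
      _ ≤ _ := mul_le_mul_of_nonneg_left h1 (by positivity)
  have hle : (∫ z : EuclideanSpace ℝ (Fin N), ‖y - z‖ ^ (-a) * (1 + ‖z‖) ^ (-b)) ≤
      ∫ z : EuclideanSpace ℝ (Fin N), (3 ^ b * (‖y - z‖ ^ (-a) * (R + ‖y - z‖) ^ (-b))
        + 5 ^ a * (‖z‖ ^ (-b) * (R + ‖z‖) ^ (-a))) := by
    refine integral_mono_of_nonneg (Filter.Eventually.of_forall fun z => by positivity)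
      (i1'.add i2') ?_
    filter_upwards [Measure.ae_ne volume (0 : EuclideanSpace ℝ (Fin N))] with z hz
    have hz0 : 0 < ‖z‖ := norm_pos_iff.mpr hz
    have t1 : ‖y‖ ≤ ‖y - z‖ + ‖z‖ := by simpa using norm_add_le (y - z) z
    have t2 : ‖z‖ ≤ ‖y‖ + ‖y - z‖ := by simpa using norm_sub_le y (y - z)
    have hd := norm_nonneg (y - z)
    rcases le_or_gt ‖y - z‖ (R / 2) with h | h
    · have := hscale 3 (1 + ‖z‖) (R + ‖y - z‖) b (by norm_num) (by positivity) (by positivity)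
        (by linarith) (by linarith)
      have h2 := mul_le_mul_of_nonneg_left this (by positivity : 0 ≤ ‖y - z‖ ^ (-a))
      have h3 : 0 ≤ 5 ^ a * (‖z‖ ^ (-b) * (R + ‖z‖) ^ (-a)) := by positivity
      linarith
    · have := hscale 5 ‖y - z‖ (R + ‖z‖) a (by norm_num) (by linarith) (by positivity)
        (by linarith) (by linarith)
      have h4 : (1 + ‖z‖) ^ (-b) ≤ ‖z‖ ^ (-b) :=
        Real.rpow_le_rpow_of_nonpos hz0 (by linarith) (by linarith)
      have h2 := mul_le_mul this h4 (by positivity) (by positivity)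
      have h3 : 0 ≤ 3 ^ b * (‖y - z‖ ^ (-a) * (R + ‖y - z‖) ^ (-b)) := by positivity
      linarith
  rw [integral_add i1' i2', integral_const_mul, integral_const_mul, e1', e1, e2,
    show (N : ℝ) - (a + b) = -δ by rw [ha, hb]; ring,
    show (N : ℝ) - (b + a) = -δ by rw [ha, hb]; ring, ← hI1, ← hI2] at hle
  have : 0 ≤ R ^ (-δ) := by positivity
  linarith
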